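/- arXiv:2206.12081 — 8 statements merged into one kernel-verified Lean document; each statement's English description precedes it below -/
import Mathlib

section
/- Let d, N be positive integers, λ > 0, and let x_1, …, x_N ∈ ℝ^d satisfy ‖x_i‖² ≤ λ for all i. Define Σ_0 = λ·I_d and Σ_i = λ·I_d + Σ_{k=1}^{i} x_k x_kᵀ. Then Σ_{i=1}^{N} x_iᵀ Σ_{i-1}⁻¹ x_i ≤ 2·(ln det(Σ_N) − d·ln λ). -/
open Matrix Finset

lemma ep_quad {d : ℕ} (lam : ℝ) (x : ℕ → Fin d → ℝ) (i : ℕ) (y : Fin d → ℝ) :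
    y ⬝ᵥ ((lam • (1 : Matrix (Fin d) (Fin d) ℝ) +
      ∑ k ∈ Finset.range i, vecMulVec (x k) (x k)) *ᵥ y)
      = lam * (y ⬝ᵥ y) + ∑ k ∈ Finset.range i, (x k ⬝ᵥ y) ^ 2 := by
  rw [add_mulVec, dotProduct_add, smul_mulVec, one_mulVec, dotProduct_smul, smul_eq_mul,
    sum_mulVec, dotProduct_sum]
  congr 1
  refine Finset.sum_congr rfl fun k _ => ?_
  rw [vecMulVec_mulVec, dotProduct_comm y]
  simp [smul_dotProduct, sq]

lemma ep_posDef {d : ℕ} (lam : ℝ) (hlam : 0 < lam) (x : ℕ → Fin d → ℝ) (i : ℕ) :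
    (lam • (1 : Matrix (Fin d) (Fin d) ℝ) +
      ∑ k ∈ Finset.range i, vecMulVec (x k) (x k)).PosDef := by
  refine (Matrix.PosDef.one.smul hlam).add_posSemidef ?_
  refine Matrix.posSemidef_sum _ fun k _ => ?_
  simpa using posSemidef_vecMulVec_self_star (x k)

/-- Elliptical potential bound: if `‖x_i‖² ≤ λ` for all `i` and
`Σ_i = λ I + ∑_{k<i} x_k x_kᵀ`, then
`∑_{i<N} x_iᵀ Σ_i⁻¹ x_i ≤ 2 (ln det Σ_N − d ln λ)`. -/
theorem elliptical_potential
    (d N : ℕ) (hd : 0 < d) (hN : 0 < N) (lam : ℝ) (hlam : 0 < lam)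
    (x : ℕ → Fin d → ℝ) (hx : ∀ i < N, x i ⬝ᵥ x i ≤ lam)
    (Sig : ℕ → Matrix (Fin d) (Fin d) ℝ)
    (hSig : ∀ i, Sig i = lam • (1 : Matrix (Fin d) (Fin d) ℝ) +
      ∑ k ∈ Finset.range i, vecMulVec (x k) (x k)) :
    ∑ i ∈ Finset.range N, x i ⬝ᵥ ((Sig i)⁻¹ *ᵥ x i) ≤
      2 * (Real.log (Sig N).det - d * Real.log lam) := by
  have hpos : ∀ i, 0 < (Sig i).det := fun i => by
    rw [hSig]; exact (ep_posDef lam hlam x i).det_pos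
  have key : ∀ n ≤ N, ∑ i ∈ Finset.range n, x i ⬝ᵥ ((Sig i)⁻¹ *ᵥ x i) ≤
      2 * (Real.log (Sig n).det - d * Real.log lam) := by
    intro n
    induction n with
    | zero =>
      intro _
      rw [hSig]
      simp [Real.log_pow]
    | succ n ih =>
      intro hn
      have ih' := ih (by omega)
      have hx' := hx n (by omega)
      rw [Finset.sum_range_succ]
      have hu : IsUnit (Sig n).det := (hpos n).ne'.isUnit
      have hdet : (Sig (n+1)).det
          = (Sig n).det * (1 + x n ⬝ᵥ ((Sig n)⁻¹ *ᵥ x n)) := by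
        have h1 : Sig (n+1) = Sig n + vecMulVec (x n) (x n) := by
          rw [hSig, hSig, Finset.sum_range_succ, add_assoc]
        rw [h1, vecMulVec_eq Unit, det_add_replicateCol_mul_replicateRow hu]
        congr 1
        rw [det_unique, Matrix.mul_assoc, ← replicateCol_mulVec]
        simp [Matrix.mul_apply, dotProduct]
      have hy : Sig n *ᵥ ((Sig n)⁻¹ *ᵥ x n) = x n := by
        rw [mulVec_mulVec, mul_nonsing_inv _ hu, one_mulVec]
      generalize (Sig n)⁻¹ *ᵥ x n = y at *
      have hq : x n ⬝ᵥ y = lam * (y ⬝ᵥ y) + ∑ k ∈ Finset.range n, (x k ⬝ᵥ y) ^ 2 := by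
        rw [← ep_quad, ← hSig, hy, dotProduct_comm]
      have hyy : 0 ≤ y ⬝ᵥ y := by
        simpa using dotProduct_star_self_nonneg y
      have hs : 0 ≤ ∑ k ∈ Finset.range n, (x k ⬝ᵥ y) ^ 2 :=
        Finset.sum_nonneg fun k _ => sq_nonneg _
      have hcs : (x n ⬝ᵥ y) ^ 2 ≤ (x n ⬝ᵥ x n) * (y ⬝ᵥ y) := by
        have := Finset.sum_mul_sq_le_sq_mul_sq Finset.univ (x n) y
        simpa [dotProduct, sq] using this
      rw [hdet]
      generalize x n ⬝ᵥ y = q at *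
      have hq0 : 0 ≤ q := by rw [hq]; positivity
      have hq1 : q ≤ 1 := by
        have h2 : q ^ 2 ≤ q := by
          have := mul_le_mul_of_nonneg_right hx' hyy
          linarith
        nlinarith
      have hl := Real.le_log_one_add_of_nonneg hq0
      have h3 : q / 2 ≤ 2 * q / (q + 2) := by
        rw [div_le_div_iff₀ (by norm_num) (by linarith)]
        nlinarith
      rw [Real.log_mul (hpos n).ne' (by linarith)]
      linarith
  exact key N le_rfl
end

section
/- Let d, N be positive integers, λ > 0, B ≥ 0, and let x_1, …, x_N ∈ ℝ^d satisfy ‖x_i‖ ≤ B for all i. Then ln det(λ·I_d + Σ_{i=1}^{N} x_i x_iᵀ) − d·ln λ ≤ d·ln(1 + N·B²/(d·λ)). -/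
open Matrix Finset

/-- Log-determinant bound (second inequality of the potential function lemma):
if `‖x_i‖ ≤ B`, then `ln det(λ I + ∑_{i<N} x_i x_iᵀ) − d ln λ ≤ d ln(1 + N B² / (d λ))`. -/
theorem logdet_bound
    (d N : ℕ) (hd : 0 < d) (hN : 0 < N) (lam B : ℝ) (hlam : 0 < lam) (hB : 0 ≤ B)
    (x : ℕ → Fin d → ℝ) (hx : ∀ i < N, Real.sqrt (x i ⬝ᵥ x i) ≤ B) :
    Real.log (lam • (1 : Matrix (Fin d) (Fin d) ℝ) +
        ∑ i ∈ Finset.range N, vecMulVec (x i) (x i)).det - d * Real.log lam ≤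
      d * Real.log (1 + N * B ^ 2 / (d * lam)) := by
  have hdR : (0 : ℝ) < d := by exact_mod_cast hd
  set S : Matrix (Fin d) (Fin d) ℝ := ∑ i ∈ Finset.range N, vecMulVec (x i) (x i) with hS
  have hSp : S.PosSemidef := by
    refine posSemidef_sum _ fun i _ => ?_
    simpa using posSemidef_vecMulVec_self_star (x i)
  have hA : (lam • (1 : Matrix (Fin d) (Fin d) ℝ) + S).PosDef :=
    (PosDef.one.smul hlam).add_posSemidef hSp
  have htr : (lam • (1 : Matrix (Fin d) (Fin d) ℝ) + S).trace ≤ lam * d + N * B ^ 2 := by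
    have h1 : S.trace ≤ N * B ^ 2 := by
      rw [hS, trace_sum]
      calc _ ≤ ∑ i ∈ Finset.range N, B ^ 2 := by
            refine Finset.sum_le_sum fun i hi => ?_
            rw [trace_vecMulVec]
            exact (Real.sqrt_le_left hB).1 (hx i (Finset.mem_range.1 hi))
        _ = _ := by simp
    rw [trace_add, trace_smul, trace_one, Fintype.card_fin, smul_eq_mul]
    linarith
  have hpos := hA.eigenvalues_pos
  have hdet := hA.1.det_eq_prod_eigenvalues
  have htr2 := hA.1.trace_eq_sum_eigenvalues
  generalize hA.1.eigenvalues = e at hpos hdet htr2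
  simp only [RCLike.ofReal_real_eq_id, id] at hdet htr2
  rw [htr2] at htr
  rw [hdet, Real.log_prod (fun i _ => (hpos i).ne')]
  set r : ℝ := 1 + N * B ^ 2 / (d * lam) with hr
  have hr0 : 0 < r := by positivity
  have hm : 0 < lam * r := by positivity
  have hmd : lam * d + N * B ^ 2 = d * (lam * r) := by
    rw [hr]; field_simp
  have key : ∀ i, Real.log (e i) ≤ Real.log lam + Real.log r + (e i / (lam * r) - 1) := by
    intro i
    have h := Real.log_le_sub_one_of_pos (div_pos (hpos i) hm)
    rw [Real.log_div (hpos i).ne' hm.ne', Real.log_mul hlam.ne' hr0.ne'] at h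
    linarith
  have hsum := Finset.sum_le_sum (s := Finset.univ) fun i _ => key i
  rw [Finset.sum_add_distrib, Finset.sum_sub_distrib, ← Finset.sum_div] at hsum
  simp only [Finset.sum_const, Finset.card_univ, Fintype.card_fin, nsmul_eq_mul, mul_one] at hsum
  have h2 : (∑ i, e i) / (lam * r) ≤ d := by
    rw [div_le_iff₀ hm, ← hmd]; exact htr
  linarith
end

section
/- Let d, N be positive integers, λ > 0, B ≥ 0 with B² ≤ λ, ε > 0, and let x_1, …, x_N ∈ ℝ^d satisfy ‖x_i‖ ≤ B for all i. Define Σ_0 = λ·I_d and Σ_i = λ·I_d + Σ_{k=1}^{i} x_k x_kᵀ. If x_iᵀ Σ_{i-1}⁻¹ x_i > ε² for every 1 ≤ i ≤ N, then N·ε² ≤ 2·d·ln(1 + N·B²/(d·λ)). -/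
open Matrix Finset

/-- Counting of bad events: if every feature has uncovered elliptical norm
(`x_iᵀ Σ_i⁻¹ x_i > ε²` with `Σ_i = λ I + ∑_{k<i} x_k x_kᵀ`), `‖x_i‖ ≤ B` and `B² ≤ λ`,
then `N ε² ≤ 2 d ln(1 + N B²/(d λ))`. -/
theorem bad_event_count
    (d N : ℕ) (hd : 0 < d) (hN : 0 < N) (lam B ε : ℝ)
    (hlam : 0 < lam) (hB : 0 ≤ B) (hBlam : B ^ 2 ≤ lam) (hε : 0 < ε)
    (x : ℕ → Fin d → ℝ) (hx : ∀ i < N, Real.sqrt (x i ⬝ᵥ x i) ≤ B)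
    (Sig : ℕ → Matrix (Fin d) (Fin d) ℝ)
    (hSig : ∀ i, Sig i = lam • (1 : Matrix (Fin d) (Fin d) ℝ) +
      ∑ k ∈ Finset.range i, vecMulVec (x k) (x k))
    (hbad : ∀ i < N, x i ⬝ᵥ ((Sig i)⁻¹ *ᵥ x i) > ε ^ 2) :
    N * ε ^ 2 ≤ 2 * d * Real.log (1 + N * B ^ 2 / (d * lam)) := by
  have hxx : ∀ i < N, x i ⬝ᵥ x i ≤ B ^ 2 := fun i hi => (Real.sqrt_le_left hB).1 (hx i hi)
  have hpd : ∀ i, (Sig i).PosDef := by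
    intro i
    rw [hSig i]
    refine Matrix.PosDef.add_posSemidef (Matrix.PosDef.one.smul hlam) ?_
    refine Matrix.posSemidef_sum _ fun k _ => ?_
    simpa using Matrix.posSemidef_vecMulVec_self_star (x k)
  have hstep : ∀ i, (Sig (i+1)).det = (Sig i).det * (1 + x i ⬝ᵥ ((Sig i)⁻¹ *ᵥ x i)) := by
    intro i
    have h1 : Sig (i+1) = Sig i + replicateCol Unit (x i) * replicateRow Unit (x i) := by
      rw [hSig, hSig, Finset.sum_range_succ, ← add_assoc, vecMulVec_eq Unit]
    rw [h1, det_add_replicateCol_mul_replicateRow (hpd i).det_pos.ne'.isUnit]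
    congr 1
    rw [Matrix.mul_assoc, det_unique]
    rw [← replicateCol_mulVec]
    simp [Matrix.mul_apply, dotProduct]
  have hdet : ∀ n ≤ N, n * Real.log (1 + ε^2) + d * Real.log lam ≤ Real.log (Sig n).det := by
    intro n
    induction n with
    | zero => intro _; simp [hSig 0, det_smul]
    | succ n ih =>
      intro hn
      have h1 := ih (by omega)
      have h2 := hbad n (by omega)
      have h3 : 0 < 1 + ε^2 := by positivity
      rw [hstep, Real.log_mul (hpd n).det_pos.ne' (by linarith)]
      have := Real.log_le_log h3 (by linarith : 1 + ε^2 ≤ 1 + x n ⬝ᵥ ((Sig n)⁻¹ *ᵥ x n))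
      push_cast
      linarith
  have he : ε^2 ≤ 1 := by
    have h0 := hbad 0 hN
    have h1 : (Sig 0)⁻¹ = lam⁻¹ • (1 : Matrix (Fin d) (Fin d) ℝ) := by
      apply Matrix.inv_eq_right_inv
      simp [hSig 0, smul_smul, hlam.ne']
    rw [h1, smul_mulVec, one_mulVec, dotProduct_smul, smul_eq_mul] at h0
    have h2 : lam⁻¹ * (x 0 ⬝ᵥ x 0) ≤ lam⁻¹ * lam :=
      mul_le_mul_of_nonneg_left ((hxx 0 hN).trans hBlam) (by positivity)
    rw [inv_mul_cancel₀ hlam.ne'] at h2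
    linarith
  have hd' : (0:ℝ) < d := by exact_mod_cast hd
  have hlog : ε^2 ≤ 2 * Real.log (1 + ε^2) := by
    have h := Real.le_log_one_add_of_nonneg (sq_nonneg ε)
    have h2 : ε^2 / 2 ≤ 2 * ε^2 / (ε^2 + 2) := by
      rw [div_le_div_iff₀ (by norm_num) (by positivity)]
      nlinarith [sq_nonneg ε]
    linarith
  have htr : (Sig N).trace ≤ d * (lam + N * B^2 / d) := by
    rw [hSig, trace_add, trace_smul, trace_one, trace_sum]
    have h : ∑ k ∈ Finset.range N, (vecMulVec (x k) (x k)).trace ≤ ∑ k ∈ Finset.range N, B^2 := by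
      refine Finset.sum_le_sum fun k hk => ?_
      rw [trace_vecMulVec]
      exact hxx k (Finset.mem_range.1 hk)
    have h2 : d * (lam + N * B^2 / d) = lam * d + N * B^2 := by field_simp
    rw [h2]
    simpa using h
  have hm : 0 < lam + N * B^2 / d := by positivity
  have hup : Real.log (Sig N).det ≤ d * Real.log (lam + N * B^2 / d) := by
    set m := lam + N * B^2 / d
    have hH := (hpd N).isHermitian
    have hev := (hpd N).eigenvalues_pos
    have ht : (Sig N).trace = ∑ i, hH.eigenvalues i := by simpa using hH.trace_eq_sum_eigenvalues
    have hD : (Sig N).det = ∏ i, hH.eigenvalues i := by simpa using hH.det_eq_prod_eigenvalues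
    rw [hD, Real.log_prod (fun i _ => (hev i).ne')]
    have hs : ∑ i, Real.log (hH.eigenvalues i) ≤ ∑ i, (hH.eigenvalues i / m - 1 + Real.log m) := by
      refine Finset.sum_le_sum fun i _ => ?_
      have := Real.log_le_sub_one_of_pos (div_pos (hev i) hm)
      rw [Real.log_div (hev i).ne' hm.ne'] at this
      linarith
    refine hs.trans ?_
    rw [Finset.sum_add_distrib, Finset.sum_sub_distrib, ← Finset.sum_div, ← ht]
    have h3 : (Sig N).trace / m ≤ d := by rwa [div_le_iff₀ hm]
    simp
    linarith
  have hfin : Real.log (1 + N * B ^ 2 / (d * lam)) = Real.log (lam + N * B^2 / d) - Real.log lam := by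
    rw [← Real.log_div hm.ne' hlam.ne']
    congr 1
    field_simp
  have hN1 := hdet N le_rfl
  have hN2 := mul_le_mul_of_nonneg_left hlog (Nat.cast_nonneg (α := ℝ) N)
  rw [hfin]
  linarith
end

section
/- Let A and B be real symmetric positive semidefinite d×d matrices. Then det(I_d + A + B) ≤ det(I_d + A)·det(I_d + B). -/
open Matrix

lemma aux_psd_factor {d : ℕ} {S : Matrix (Fin d) (Fin d) ℝ} (hS : S.PosSemidef) :
    ∃ C : Matrix (Fin d) (Fin d) ℝ, S = Cᴴ * C := by
  open scoped MatrixOrder in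
  exact CStarAlgebra.nonneg_iff_eq_star_mul_self.mp hS.nonneg

lemma aux_one_le_det {d : ℕ} {S : Matrix (Fin d) (Fin d) ℝ} (hS : S.PosSemidef) :
    1 ≤ (1 + S).det := by
  have h := hS.isHermitian.spectral_theorem
  have h2 : (1 + S).det = ∏ i, (1 + hS.isHermitian.eigenvalues i) := by
    conv_lhs => rw [h]
    rw [Unitary.conjStarAlgAut_apply, Matrix.mul_assoc, det_one_add_mul_comm, Matrix.mul_assoc]
    rw [Unitary.coe_star_mul_self, Matrix.mul_one, ← diagonal_one, diagonal_add, det_diagonal]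
    simp
  rw [h2]
  calc (1 : ℝ) = ∏ i : Fin d, (1 : ℝ) := by simp
    _ ≤ _ := Finset.prod_le_prod (fun _ _ => zero_le_one)
      (fun i _ => by linarith [hS.eigenvalues_nonneg i])

lemma aux_det_le {d : ℕ} {P Q : Matrix (Fin d) (Fin d) ℝ} (hP : P.PosDef) (hQ : Q.PosSemidef) :
    P.det ≤ (P + Q).det := by
  obtain ⟨C, rfl⟩ := aux_psd_factor hQ
  rw [det_add_mul _ _ ((Matrix.isUnit_iff_isUnit_det _).mp hP.isUnit)]
  have h := aux_one_le_det (hP.inv.posSemidef.mul_mul_conjTranspose_same C)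
  exact le_mul_of_one_le_right hP.det_pos.le h

/-- Subadditivity of the log-determinant over PSD summands:
`det(I + A + B) ≤ det(I + A) det(I + B)` for real symmetric PSD matrices `A`, `B`. -/
theorem det_one_add_add_le
    {d : ℕ} (A B : Matrix (Fin d) (Fin d) ℝ)
    (hA : A.PosSemidef) (hB : B.PosSemidef) :
    (1 + A + B).det ≤ (1 + A).det * (1 + B).det := by
  obtain ⟨C, rfl⟩ := aux_psd_factor hB
  have hM : (1 + A).PosDef := PosDef.one.add_posSemidef hA
  have hu : IsUnit (1 + A).det := (Matrix.isUnit_iff_isUnit_det _).mp hM.isUnit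
  rw [det_add_mul _ _ hu, det_one_add_mul_comm Cᴴ C]
  refine mul_le_mul_of_nonneg_left ?_ hM.det_pos.le
  have hAA : (A + Aᴴ * A).PosSemidef := hA.add (posSemidef_conjTranspose_mul_self A)
  have hN := hAA.mul_mul_conjTranspose_same (1 + A)⁻¹
  have hNe : (1 + A)⁻¹ * (A + Aᴴ * A) * ((1 + A)⁻¹)ᴴ = 1 - (1 + A)⁻¹ := by
    rw [hM.inv.isHermitian.eq, hA.isHermitian.eq]
    have e : A + A * A = (1 + A) * (1 + A) - (1 + A) := by noncomm_ring
    rw [e, Matrix.mul_sub, ← Matrix.mul_assoc, nonsing_inv_mul _ hu, Matrix.one_mul,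
      Matrix.sub_mul, mul_nonsing_inv _ hu, Matrix.one_mul]
  rw [hNe] at hN
  have hQ := hN.mul_mul_conjTranspose_same C
  have hP : (1 + C * (1 + A)⁻¹ * Cᴴ).PosDef :=
    PosDef.one.add_posSemidef (hM.inv.posSemidef.mul_mul_conjTranspose_same C)
  have h := aux_det_le hP hQ
  have e : 1 + C * (1 + A)⁻¹ * Cᴴ + C * (1 - (1 + A)⁻¹) * Cᴴ = 1 + C * Cᴴ := by
    noncomm_ring
  rwa [e] at h
end

section
/- Let N, M be positive integers, γ ≥ 0, and let K_1, …, K_M be real symmetric positive semidefinite N×N matrices such that ln det(I_N + K_j) ≤ γ for every j. Then ln det(I_N + (1/M)·Σ_{j=1}^{M} K_j) ≤ M·γ. -/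
open Matrix

lemma aux_one_le {N : ℕ} {P : Matrix (Fin N) (Fin N) ℝ} (hP : P.PosSemidef) :
    1 ≤ (1 + P).det := by
  have h1 : (1 + P).det = ∏ i, (1 + hP.isHermitian.eigenvalues i) := by
    have h2 := hP.isHermitian.charpoly_eq
    have h3 : (P.charpoly).eval (-1) = (-1 - P).det := by
      rw [Matrix.eval_charpoly]
      congr 1
      simp only [Matrix.scalar_apply, sub_left_inj]
      ext i j
      by_cases hij : i = j <;> simp [Matrix.diagonal, Matrix.one_apply, hij]
    have h4 : (-1 - P) = -(1 + P) := by abel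
    rw [h4, Matrix.det_neg, h2, Polynomial.eval_prod] at h3
    have h5 : ∀ i, Polynomial.eval (-1) (Polynomial.X - Polynomial.C
        ((hP.isHermitian.eigenvalues i : ℝ))) = (-1) * (1 + hP.isHermitian.eigenvalues i) := by
      intro i; simp; ring
    have h6 := (Finset.prod_congr rfl fun i _ => h5 i).symm.trans h3
    rw [Finset.prod_mul_distrib] at h6
    simp only [Finset.prod_const, Finset.card_univ] at h6
    exact (mul_left_cancel₀ (pow_ne_zero _ (by norm_num)) h6).symm
  rw [h1]
  have h7 : ∏ _i : Fin N, (1 : ℝ) ≤ ∏ i, (1 + hP.isHermitian.eigenvalues i) :=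
    Finset.prod_le_prod (fun _ _ => zero_le_one)
      fun i _ => by linarith [hP.eigenvalues_nonneg i]
  simpa using h7

lemma aux_fact {N : ℕ} {B : Matrix (Fin N) (Fin N) ℝ} (hB : B.PosSemidef) :
    ∃ X : Matrix (Fin N) (Fin N) ℝ, B = Xᴴ * X := by
  open scoped MatrixOrder in
  exact CStarAlgebra.nonneg_iff_eq_star_mul_self.mp hB.nonneg

lemma aux_det {N : ℕ} {A : Matrix (Fin N) (Fin N) ℝ} (hA : A.PosDef)
    (X : Matrix (Fin N) (Fin N) ℝ) :
    (A + Xᴴ * X).det = A.det * (1 + X * A⁻¹ * Xᴴ).det := by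
  have hu : IsUnit A.det := hA.det_pos.ne'.isUnit
  rw [Matrix.mul_assoc, Matrix.det_one_add_mul_comm, ← Matrix.det_mul, Matrix.mul_add,
    Matrix.mul_one, Matrix.mul_assoc, Matrix.mul_nonsing_inv_cancel_left _ _ hu]

lemma aux_mono {N : ℕ} {A B : Matrix (Fin N) (Fin N) ℝ} (hA : A.PosDef)
    (hB : B.PosSemidef) : A.det ≤ (A + B).det := by
  obtain ⟨X, rfl⟩ := aux_fact hB
  rw [aux_det hA]
  have := aux_one_le (hA.inv.posSemidef.mul_mul_conjTranspose_same X)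
  nlinarith [hA.det_pos]

lemma aux_sub {N : ℕ} {A B : Matrix (Fin N) (Fin N) ℝ} (hA : A.PosSemidef)
    (hB : B.PosSemidef) : (1 + (A + B)).det ≤ (1 + A).det * (1 + B).det := by
  obtain ⟨X, rfl⟩ := aux_fact hB
  have hA1 : (1 + A).PosDef := Matrix.PosDef.one.add_posSemidef hA
  have hu : IsUnit (1 + A).det := hA1.det_pos.ne'.isUnit
  rw [← add_assoc, aux_det hA1]
  refine mul_le_mul_of_nonneg_left ?_ hA1.det_pos.le
  rw [Matrix.det_one_add_mul_comm Xᴴ X]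
  have hQ : (A + A * A).PosSemidef := by
    refine hA.add ?_
    have := Matrix.posSemidef_conjTranspose_mul_self A
    rwa [hA.isHermitian.eq] at this
  have hR : (1 - (1 + A)⁻¹).PosSemidef := by
    have h := hQ.mul_mul_conjTranspose_same (1 + A)⁻¹
    rw [hA1.inv.isHermitian.eq] at h
    convert h using 1
    have e : A + A * A = (1 + A) * (1 + A) - (1 + A) := by noncomm_ring
    rw [e, Matrix.mul_sub, Matrix.nonsing_inv_mul_cancel_left _ _ hu,
      Matrix.nonsing_inv_mul _ hu, Matrix.sub_mul, Matrix.mul_nonsing_inv _ hu, Matrix.one_mul]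
  have e : 1 + X * Xᴴ = (1 + X * (1 + A)⁻¹ * Xᴴ) + X * (1 - (1 + A)⁻¹) * Xᴴ := by
    rw [Matrix.mul_sub, Matrix.sub_mul, Matrix.mul_one]; abel
  rw [e]
  exact aux_mono (Matrix.PosDef.one.add_posSemidef
    (hA1.inv.posSemidef.mul_mul_conjTranspose_same X)) (hR.mul_mul_conjTranspose_same X)

/-- Information gain of an averaged kernel matrix: if `ln det(I + K_j) ≤ γ` for each of
`M` PSD matrices `K_j`, then `ln det(I + (1/M) ∑_j K_j) ≤ M γ`. -/
theorem information_gain_average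
    (N M : ℕ) (hN : 0 < N) (hM : 0 < M) (γ : ℝ) (hγ : 0 ≤ γ)
    (K : Fin M → Matrix (Fin N) (Fin N) ℝ)
    (hK : ∀ j, (K j).PosSemidef)
    (hld : ∀ j, Real.log (1 + K j).det ≤ γ) :
    Real.log (1 + (M : ℝ)⁻¹ • ∑ j, K j).det ≤ M * γ := by
  have hS : ∀ s : Finset (Fin M), (∑ j ∈ s, K j).PosSemidef := fun s =>
    Matrix.posSemidef_sum s fun j _ => hK j
  have key : ∀ s : Finset (Fin M), Real.log (1 + ∑ j ∈ s, K j).det ≤ s.card * γ := by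
    intro s
    induction s using Finset.induction_on with
    | empty => simp
    | insert a s ha ih =>
      rw [Finset.sum_insert ha, Finset.card_insert_of_notMem ha]
      have h0 := aux_one_le ((hK a).add (hS s))
      have h1 := aux_one_le (hK a)
      have h2 := aux_one_le (hS s)
      have h3 := Real.log_le_log (by linarith) (aux_sub (hK a) (hS s))
      rw [Real.log_mul (by linarith) (by linarith)] at h3
      push_cast
      linarith [hld a]
  have hM1 : (1 : ℝ) ≤ M := by exact_mod_cast hM
  have hP : ((M : ℝ)⁻¹ • ∑ j, K j).PosSemidef := (hS _).smul (by positivity)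
  have hP' : ((1 - (M : ℝ)⁻¹) • ∑ j, K j).PosSemidef :=
    (hS _).smul (sub_nonneg.2 (inv_le_one_of_one_le₀ hM1))
  have h := aux_mono (Matrix.PosDef.one.add_posSemidef hP) hP'
  rw [add_assoc, ← add_smul, add_sub_cancel, one_smul] at h
  have h1 := aux_one_le hP
  have h2 := key Finset.univ
  rw [Finset.card_univ, Fintype.card_fin] at h2
  exact (Real.log_le_log (by linarith) h).trans h2
end

section
/- Let λ > 0, Θ ≥ 0, E ≥ 0, ε ≥ 0. Let x̂_1, …, x̂_N ∈ ℝ^d and x_1, …, x_N ∈ ℝ^d, let θ* ∈ ℝ^d with ‖θ*‖ ≤ Θ, let z_1, …, z_N ∈ ℝ, and set y_i = ⟨θ*, x_i⟩ + z_i, Σ = λ·I_d + Σ_{i=1}^{N} x̂_i x̂_iᵀ, and θ̂ = Σ⁻¹ Σ_{i=1}^{N} y_i·x̂_i. Suppose |⟨x_i − x̂_i, θ*⟩ + z_i| ≤ E for every i. Then for any u ∈ ℝ^d with √(uᵀ Σ⁻¹ u) ≤ ε: |⟨θ̂ − θ*, u⟩| ≤ √λ·Θ·ε + E·√N·ε.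 -/
open Matrix Finset

/-- Deterministic least-squares error bound: if each response perturbation
`⟨x_i − x̂_i, θ*⟩ + z_i` is bounded by `E`, `‖θ*‖ ≤ Θ`, and the test direction `u`
satisfies `√(uᵀ Σ⁻¹ u) ≤ ε`, then `|⟨θ̂ − θ*, u⟩| ≤ √λ Θ ε + E √N ε`. -/
theorem least_squares_error_bound
    {d N : ℕ} (lam Θ E ε : ℝ) (hlam : 0 < lam) (hΘ : 0 ≤ Θ) (hE : 0 ≤ E) (hε : 0 ≤ ε)
    (xh x : Fin N → Fin d → ℝ) (θs : Fin d → ℝ)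
    (hθs : Real.sqrt (θs ⬝ᵥ θs) ≤ Θ) (z : Fin N → ℝ)
    (y : Fin N → ℝ) (hy : ∀ i, y i = θs ⬝ᵥ x i + z i)
    (Sig : Matrix (Fin d) (Fin d) ℝ)
    (hSig : Sig = lam • (1 : Matrix (Fin d) (Fin d) ℝ) + ∑ i, vecMulVec (xh i) (xh i))
    (θh : Fin d → ℝ) (hθh : θh = Sig⁻¹ *ᵥ (∑ i, y i • xh i))
    (hpert : ∀ i, |(x i - xh i) ⬝ᵥ θs + z i| ≤ E)
    (u : Fin d → ℝ) (hu : Real.sqrt (u ⬝ᵥ (Sig⁻¹ *ᵥ u)) ≤ ε) :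
    |(θh - θs) ⬝ᵥ u| ≤ Real.sqrt lam * Θ * ε + E * Real.sqrt N * ε := by
  have key : ∀ p q : Fin d → ℝ, p ⬝ᵥ (Sig *ᵥ q) =
      lam * (p ⬝ᵥ q) + ∑ i, (xh i ⬝ᵥ p) * (xh i ⬝ᵥ q) := by
    intro p q
    rw [hSig, Matrix.add_mulVec, Matrix.smul_mulVec, Matrix.one_mulVec, Matrix.sum_mulVec,
      dotProduct_add, dotProduct_smul, dotProduct_sum, smul_eq_mul]
    congr 1
    refine Finset.sum_congr rfl fun i _ => ?_
    rw [Matrix.vecMulVec_mulVec, dotProduct_comm (xh i) p]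
    simp [dotProduct_smul, mul_comm]
  have nn : ∀ p : Fin d → ℝ, 0 ≤ p ⬝ᵥ p := fun p =>
    Finset.sum_nonneg fun i _ => mul_self_nonneg _
  have hdet : Sig.det ≠ 0 := by
    intro h0
    obtain ⟨v, hv, hv0⟩ := Matrix.exists_mulVec_eq_zero_iff.mpr h0
    have h1 := key v v
    rw [hv0, dotProduct_zero] at h1
    have h2 : 0 ≤ ∑ i, (xh i ⬝ᵥ v) * (xh i ⬝ᵥ v) :=
      Finset.sum_nonneg fun i _ => mul_self_nonneg _
    have h3 := nn v
    have h4 : v ⬝ᵥ v = 0 := by nlinarith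
    exact hv (dotProduct_self_eq_zero.mp h4)
  have hunit : IsUnit Sig.det := isUnit_iff_ne_zero.mpr hdet
  have hinv : ∀ p : Fin d → ℝ, Sig *ᵥ (Sig⁻¹ *ᵥ p) = p := by
    intro p
    rw [Matrix.mulVec_mulVec, Matrix.mul_nonsing_inv _ hunit, Matrix.one_mulVec]
  obtain ⟨v, hv⟩ : ∃ v, v = Sig⁻¹ *ᵥ u := ⟨_, rfl⟩
  have hSv : Sig *ᵥ v = u := by rw [hv, hinv]
  rw [← hv] at hu
  have hq : u ⬝ᵥ v = lam * (v ⬝ᵥ v) + ∑ i, (xh i ⬝ᵥ v) * (xh i ⬝ᵥ v) := by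
    rw [← key, hSv, dotProduct_comm]
  have hsn : 0 ≤ ∑ i, (xh i ⬝ᵥ v) * (xh i ⬝ᵥ v) :=
      Finset.sum_nonneg fun i _ => mul_self_nonneg _
  have hln : 0 ≤ lam * (v ⬝ᵥ v) := mul_nonneg hlam.le (nn v)
  have hε2 : u ⬝ᵥ v ≤ ε ^ 2 := (Real.sqrt_le_left hε).mp hu
  have hΘ2 : θs ⬝ᵥ θs ≤ Θ ^ 2 := (Real.sqrt_le_left hΘ).mp hθs
  have hθhu : θh ⬝ᵥ u = ∑ i, y i * (xh i ⬝ᵥ v) := by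
    have h1 : θh ⬝ᵥ u = v ⬝ᵥ (Sig *ᵥ θh) := by
      rw [← hSv, key, key, dotProduct_comm]
      simp only [mul_comm]
    rw [h1, hθh, hinv, dotProduct_sum]
    refine Finset.sum_congr rfl fun i _ => ?_
    rw [dotProduct_smul, smul_eq_mul, dotProduct_comm]
  have hθsu : θs ⬝ᵥ u = lam * (θs ⬝ᵥ v) + ∑ i, (xh i ⬝ᵥ θs) * (xh i ⬝ᵥ v) := by
    rw [← hSv, key]
  have hmain : (θh - θs) ⬝ᵥ u =
      ∑ i, ((x i - xh i) ⬝ᵥ θs + z i) * (xh i ⬝ᵥ v) - lam * (θs ⬝ᵥ v) := by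
    rw [sub_dotProduct, hθhu, hθsu, add_comm (lam * _), ← sub_sub, ← Finset.sum_sub_distrib]
    congr 1
    refine Finset.sum_congr rfl fun i _ => ?_
    rw [hy, sub_dotProduct, dotProduct_comm θs]
    ring
  have hA : |∑ i, ((x i - xh i) ⬝ᵥ θs + z i) * (xh i ⬝ᵥ v)| ≤ E * Real.sqrt N * ε := by
    apply abs_le_of_sq_le_sq _ (by positivity)
    have h1 := Finset.sum_mul_sq_le_sq_mul_sq Finset.univ
      (fun i => (x i - xh i) ⬝ᵥ θs + z i) (fun i => xh i ⬝ᵥ v)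
    have h2 : ∑ i, ((x i - xh i) ⬝ᵥ θs + z i) ^ 2 ≤ N * E ^ 2 := by
      have : ∑ i : Fin N, ((x i - xh i) ⬝ᵥ θs + z i) ^ 2 ≤ ∑ _i : Fin N, E ^ 2 :=
        Finset.sum_le_sum fun i _ => sq_le_sq' (abs_le.mp (hpert i)).1 (abs_le.mp (hpert i)).2
      simpa using this
    have h3 : ∑ i, (xh i ⬝ᵥ v) ^ 2 ≤ ε ^ 2 := by
      simp only [pow_two (_ ⬝ᵥ _)]
      linarith
    refine h1.trans ((mul_le_mul h2 h3 (Finset.sum_nonneg fun i _ => sq_nonneg _)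
      (by positivity)).trans_eq ?_)
    rw [mul_pow, mul_pow, Real.sq_sqrt (Nat.cast_nonneg N)]
    ring
  have hB : |lam * (θs ⬝ᵥ v)| ≤ Real.sqrt lam * Θ * ε := by
    apply abs_le_of_sq_le_sq _ (by positivity)
    have h1 : (θs ⬝ᵥ v) ^ 2 ≤ (θs ⬝ᵥ θs) * (v ⬝ᵥ v) := by
      have := Finset.sum_mul_sq_le_sq_mul_sq Finset.univ θs v
      simpa only [dotProduct, pow_two] using this
    have h3 : lam * (v ⬝ᵥ v) ≤ ε ^ 2 := by linarith
    have h4 := mul_le_mul hΘ2 h3 hln (sq_nonneg Θ)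
    rw [mul_pow, mul_pow, mul_pow, Real.sq_sqrt hlam.le]
    calc lam ^ 2 * (θs ⬝ᵥ v) ^ 2 ≤ lam ^ 2 * ((θs ⬝ᵥ θs) * (v ⬝ᵥ v)) := by gcongr
      _ = lam * ((θs ⬝ᵥ θs) * (lam * (v ⬝ᵥ v))) := by ring
      _ ≤ lam * (Θ ^ 2 * ε ^ 2) := by gcongr
      _ = _ := by ring
  rw [hmain]
  refine (abs_sub _ _).trans ?_
  linarith
end

section
/- Let λ > 0, Θ ≥ 0, E ≥ 0, E' ≥ 0, ε ≥ 0. Let x̂_1, …, x̂_N ∈ ℝ^d and x_1, …, x_N ∈ ℝ^d, let θ* ∈ ℝ^d with ‖θ*‖ ≤ Θ, let z_1, …, z_N ∈ ℝ, and set y_i = ⟨θ*, x_i⟩ + z_i, Σ = λ·I_d + Σ_{i=1}^{N} x̂_i x̂_iᵀ, and θ̂ = Σ⁻¹ Σ_{i=1}^{N} y_i·x̂_i. Suppose |⟨x_i − x̂_i, θ*⟩ + z_i| ≤ E for every i. Then for any test vectors x̂, x ∈ ℝ^d with √(x̂ᵀ Σ⁻¹ x̂) ≤ ε and |⟨θ*,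 x̂ − x⟩| ≤ E': |⟨θ̂, x̂⟩ − ⟨θ*, x⟩| ≤ √λ·Θ·ε + E·√N·ε + E'. -/
open Matrix Finset

theorem bil_aux {d N : ℕ} (lam : ℝ) (xh : Fin N → Fin d → ℝ) (v u : Fin d → ℝ) :
    v ⬝ᵥ ((lam • (1 : Matrix (Fin d) (Fin d) ℝ) + ∑ i, vecMulVec (xh i) (xh i)) *ᵥ u)
      = lam * (v ⬝ᵥ u) + ∑ i, (v ⬝ᵥ xh i) * (xh i ⬝ᵥ u) := by
  rw [add_mulVec, smul_mulVec, one_mulVec, dotProduct_add, dotProduct_smul, smul_eq_mul,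
    sum_mulVec, dotProduct_sum]
  congr 1
  refine Finset.sum_congr rfl fun i _ => ?_
  rw [vecMulVec_mulVec, dotProduct_smul]
  simp [mul_comm]

/-- Full prediction-error guarantee: under the least-squares setup with training
perturbations bounded by `E`, a covered estimated test feature `x̂`
(`√(x̂ᵀ Σ⁻¹ x̂) ≤ ε`) and test-time feature-estimation error `|⟨θ*, x̂ − x⟩| ≤ E'`,
we have `|⟨θ̂, x̂⟩ − ⟨θ*, x⟩| ≤ √λ Θ ε + E √N ε + E'`. -/
theorem prediction_error_bound
    {d N : ℕ} (lam Θ E E' ε : ℝ)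
    (hlam : 0 < lam) (hΘ : 0 ≤ Θ) (hE : 0 ≤ E) (hE' : 0 ≤ E') (hε : 0 ≤ ε)
    (xh x : Fin N → Fin d → ℝ) (θs : Fin d → ℝ)
    (hθs : Real.sqrt (θs ⬝ᵥ θs) ≤ Θ) (z : Fin N → ℝ)
    (y : Fin N → ℝ) (hy : ∀ i, y i = θs ⬝ᵥ x i + z i)
    (Sig : Matrix (Fin d) (Fin d) ℝ)
    (hSig : Sig = lam • (1 : Matrix (Fin d) (Fin d) ℝ) + ∑ i, vecMulVec (xh i) (xh i))
    (θh : Fin d → ℝ) (hθh : θh = Sig⁻¹ *ᵥ (∑ i, y i • xh i))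
    (hpert : ∀ i, |(x i - xh i) ⬝ᵥ θs + z i| ≤ E)
    (xhTest xTest : Fin d → ℝ)
    (hcov : Real.sqrt (xhTest ⬝ᵥ (Sig⁻¹ *ᵥ xhTest)) ≤ ε)
    (htest : |θs ⬝ᵥ (xhTest - xTest)| ≤ E') :
    |θh ⬝ᵥ xhTest - θs ⬝ᵥ xTest| ≤
      Real.sqrt lam * Θ * ε + E * Real.sqrt N * ε + E' := by
  have bil : ∀ v u, v ⬝ᵥ (Sig *ᵥ u) = lam * (v ⬝ᵥ u) + ∑ i, (v ⬝ᵥ xh i) * (xh i ⬝ᵥ u) := by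
    intro v u
    rw [hSig]
    exact bil_aux lam xh v u
  have nn : ∀ u : Fin d → ℝ, 0 ≤ u ⬝ᵥ u := fun u =>
    Finset.sum_nonneg fun i _ => mul_self_nonneg (u i)
  have quad : ∀ u, u ⬝ᵥ (Sig *ᵥ u) = lam * (u ⬝ᵥ u) + ∑ i, (xh i ⬝ᵥ u) ^ 2 := by
    intro u
    rw [bil]
    congr 1
    refine Finset.sum_congr rfl fun i _ => ?_
    rw [dotProduct_comm u, sq]
  have hunit : IsUnit Sig := by
    rw [← mulVec_injective_iff_isUnit]
    intro a b hab
    have h0 : Sig *ᵥ (a - b) = 0 := by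
      rw [mulVec_sub]; exact sub_eq_zero.mpr hab
    have h1 := quad (a - b)
    rw [h0, dotProduct_zero] at h1
    have h2 : 0 ≤ ∑ i, (xh i ⬝ᵥ (a - b)) ^ 2 := Finset.sum_nonneg fun i _ => sq_nonneg _
    have h3 : (a - b) ⬝ᵥ (a - b) = 0 := by
      have := nn (a - b)
      by_contra hne
      have : 0 < (a - b) ⬝ᵥ (a - b) := lt_of_le_of_ne this (Ne.symm hne)
      have := mul_pos hlam this
      linarith
    exact sub_eq_zero.mp (dotProduct_self_eq_zero.mp h3)
  have hdet : IsUnit Sig.det := (isUnit_iff_isUnit_det Sig).mp hunit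
  set b := ∑ i, y i • xh i with hb
  set u := Sig⁻¹ *ᵥ xhTest with hu
  have hSu : Sig *ᵥ u = xhTest := by
    rw [hu, mulVec_mulVec, mul_nonsing_inv _ hdet, one_mulVec]
  have hSt : Sig *ᵥ θh = b := by
    rw [hθh, mulVec_mulVec, mul_nonsing_inv _ hdet, one_mulVec]
  have hsym : θh ⬝ᵥ xhTest = u ⬝ᵥ b := by
    rw [← hSu, ← hSt, bil, bil, dotProduct_comm θh u]
    congr 1
    refine Finset.sum_congr rfl fun i _ => ?_
    rw [dotProduct_comm θh, dotProduct_comm u, mul_comm]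
  have hQ : lam * (u ⬝ᵥ u) + ∑ i, (xh i ⬝ᵥ u) ^ 2 ≤ ε ^ 2 := by
    rw [← quad, hSu, dotProduct_comm]
    exact (Real.sqrt_le_left hε).mp hcov
  have hW0 : 0 ≤ ∑ i, (xh i ⬝ᵥ u) ^ 2 := Finset.sum_nonneg fun i _ => sq_nonneg _
  have hU0 : 0 ≤ lam * (u ⬝ᵥ u) := mul_nonneg hlam.le (nn u)
  have hθ2 : θs ⬝ᵥ θs ≤ Θ ^ 2 := (Real.sqrt_le_left hΘ).mp hθs
  have hdiff : θh ⬝ᵥ xhTest - θs ⬝ᵥ xhTest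
      = ∑ i, ((x i - xh i) ⬝ᵥ θs + z i) * (xh i ⬝ᵥ u) - lam * (θs ⬝ᵥ u) := by
    rw [hsym]
    conv_lhs => rw [← hSu]
    rw [bil, hb, dotProduct_sum, sub_add_eq_sub_sub_swap, ← Finset.sum_sub_distrib]
    congr 1
    refine Finset.sum_congr rfl fun i _ => ?_
    rw [dotProduct_smul, hy, smul_eq_mul, sub_dotProduct, dotProduct_comm u,
      dotProduct_comm (x i), dotProduct_comm (xh i) θs]
    ring
  have h1 : |lam * (θs ⬝ᵥ u)| ≤ Real.sqrt lam * Θ * ε := by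
    apply abs_le_of_sq_le_sq _ (by positivity)
    have cs : (θs ⬝ᵥ u) ^ 2 ≤ (θs ⬝ᵥ θs) * (u ⬝ᵥ u) := by
      have := Finset.sum_mul_sq_le_sq_mul_sq Finset.univ θs u
      simpa [dotProduct, sq] using this
    rw [mul_pow, mul_pow, mul_pow, Real.sq_sqrt hlam.le]
    calc lam ^ 2 * (θs ⬝ᵥ u) ^ 2 ≤ lam ^ 2 * ((θs ⬝ᵥ θs) * (u ⬝ᵥ u)) := by gcongr
      _ = lam * ((θs ⬝ᵥ θs) * (lam * (u ⬝ᵥ u))) := by ring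
      _ ≤ lam * (Θ ^ 2 * ε ^ 2) := by
        gcongr
        linarith
      _ = _ := by ring
  have h2 : |∑ i, ((x i - xh i) ⬝ᵥ θs + z i) * (xh i ⬝ᵥ u)| ≤ E * Real.sqrt N * ε := by
    apply abs_le_of_sq_le_sq _ (by positivity)
    rw [mul_pow, mul_pow, Real.sq_sqrt (Nat.cast_nonneg N)]
    refine (Finset.sum_mul_sq_le_sq_mul_sq Finset.univ _ _).trans ?_
    have hs : ∑ i, ((x i - xh i) ⬝ᵥ θs + z i) ^ 2 ≤ E ^ 2 * N := by
      calc _ ≤ ∑ _i : Fin N, E ^ 2 := Finset.sum_le_sum fun i _ => by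
              rw [← sq_abs]
              exact pow_le_pow_left₀ (abs_nonneg _) (hpert i) 2
        _ = _ := by simp [mul_comm]
    exact mul_le_mul hs (by linarith) hW0 (by positivity)
  have h3 : θs ⬝ᵥ (xhTest - xTest) = θs ⬝ᵥ xhTest - θs ⬝ᵥ xTest := dotProduct_sub _ _ _
  rw [h3] at htest
  rw [abs_le] at *
  constructor <;> linarith [h1.1, h1.2, h2.1, h2.2, htest.1, htest.2]
end

section
/- Let n be a positive integer, let w ∈ ℝⁿ, and let α ∈ ℝ. Define φ : ℝⁿ → ℝ^{(n+1)×(n+1)} by φ(x) = (1, x)·(1, x)ᵀ, the outer product of the vector (1, x) ∈ ℝ^{n+1} with itself. Then there exists a bilinear form B : ℝ^{(n+1)×(n+1)} × ℝ^{(n+1)×(n+1)} → ℝ such that for all v, u ∈ ℝⁿ: B(φ(v), φ(u)) = (⟨v, u⟩ + 2α)·⟨v, w⟩. -/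
open Matrix

/-- Tensorization step of the gap lower bound: for `φ(x) = (1,x)(1,x)ᵀ` there is a
bilinear form `B` on `ℝ^{(n+1)×(n+1)}` with
`B(φ(v), φ(u)) = (⟨v,u⟩ + 2α)·⟨v,w⟩` for all `v, u ∈ ℝⁿ`. -/
theorem tensorization_bilinear
    (n : ℕ) (hn : 0 < n) (w : Fin n → ℝ) (α : ℝ) :
    ∃ B : Matrix (Fin (n + 1)) (Fin (n + 1)) ℝ →ₗ[ℝ]
        Matrix (Fin (n + 1)) (Fin (n + 1)) ℝ →ₗ[ℝ] ℝ,
      ∀ v u : Fin n → ℝ,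
        B (vecMulVec (Fin.cons 1 v) (Fin.cons 1 v))
            (vecMulVec (Fin.cons 1 u) (Fin.cons 1 u)) =
          (v ⬝ᵥ u + 2 * α) * (v ⬝ᵥ w) := by
  refine ⟨LinearMap.mk₂ ℝ (fun X Y =>
      (∑ i : Fin n, ∑ j : Fin n, X i.succ j.succ * w j * Y 0 i.succ) +
        ∑ j : Fin n, 2 * α * (X 0 j.succ * w j * Y 0 0)) ?_ ?_ ?_ ?_, ?_⟩
  · intro X X' Y
    simp only [Matrix.add_apply, add_mul, mul_add, Finset.sum_add_distrib]
    ring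
  · intro c X Y
    simp only [Matrix.smul_apply, smul_eq_mul, mul_add, Finset.mul_sum]
    congr 1
    · exact Finset.sum_congr rfl fun i _ => Finset.sum_congr rfl fun j _ => by ring
    · exact Finset.sum_congr rfl fun j _ => by ring
  · intro X Y Y'
    simp only [Matrix.add_apply, mul_add, Finset.sum_add_distrib]
    ring
  · intro c X Y
    simp only [Matrix.smul_apply, smul_eq_mul, mul_add, Finset.mul_sum]
    congr 1
    · exact Finset.sum_congr rfl fun i _ => Finset.sum_congr rfl fun j _ => by ring
    · exact Finset.sum_congr rfl fun j _ => by ring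
  · intro v u
    simp only [LinearMap.mk₂_apply, vecMulVec_apply, Fin.cons_zero, Fin.cons_succ, dotProduct]
    rw [add_mul, Finset.sum_mul_sum, Finset.mul_sum]
    congr 1
    · exact Finset.sum_congr rfl fun i _ => Finset.sum_congr rfl fun j _ => by ring
    · exact Finset.sum_congr rfl fun j _ => by ring
end
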